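/- For every z > 0, define g_0 = 0 and g_n = n/2 − 2γ_n·(γ_{n+1} + γ_n + γ_{n−1}) for n ≥ 1, where γ_n = γ_n(z) are the recurrence coefficients of the monic orthogonal polynomials for the weight e^{−x⁴} on [−z, z]. Then for all n ≥ 1 the coupled nonlinear relation z²·g_n² = γ_n·(g_{n+1} + g_n)·(g_n + g_{n−1}) holds. -/

import Mathlib

/-!
Write `w = exp (-z ^ 4)` and let `L p = ∫ x in -z..z, p x * exp (-x ^ 4)`. Integration by parts
gives `L p' = 4 L (x³ p) + w (p z - p (-z))`. For `p = P_{n+1} P_n` orthogonality evaluates both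
moments in terms of `h_n` and `γ`, and parity doubles the boundary term, so that `g_{n+1}` is
exactly that boundary term: `g_{n+1} h_n = w P_{n+1}(z) P_n(z)`. The recurrence at `x = z` then
telescopes two consecutive values into `(g_{n+1} + g_n) h_n = z w P_n(z)²`. Hence both sides of the
relation for `n + 1`, multiplied by `h_n²`, are `(z w P_{n+1}(z) P_n(z))²`.
-/

open Polynomial MeasureTheory

section OrthogonalPolynomials

variable {R : Type*} [CommRing R] {L : R[X] →ₗ[R] R} {P : ℕ → R[X]} {γ : ℕ → R}

/-- A sequence of monic polynomials, one in each degree, that are pairwise orthogonal for the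
bilinear form `(p, q) ↦ L (p * q)` of a moment functional `L`. The squared norms `L (P n ^ 2)` are
allowed to vanish. -/
structure IsMonicOrthogonal (L : R[X] →ₗ[R] R) (P : ℕ → R[X]) : Prop where
  monic (n : ℕ) : (P n).Monic
  natDegree_eq (n : ℕ) : (P n).natDegree = n
  orthogonal {m n : ℕ} (hmn : m ≠ n) : L (P m * P n) = 0

/-- The three-term recurrence, with coefficients `γ`, of monic orthogonal polynomials for an even
weight. The term `P_{-1}` is avoided by prescribing `P 1`, and `γ 0` is normalized to `0`. -/
structure IsSymmetricRecurrence (P : ℕ → R[X]) (γ : ℕ → R) : Prop where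
  zero : P 0 = 1
  one : P 1 = X
  coeff_zero : γ 0 = 0
  X_mul_succ (n : ℕ) : X * P (n + 1) = P (n + 2) + C (γ (n + 1)) * P n

theorem map_C_mul (L : R[X] →ₗ[R] R) (c : R) (p : R[X]) : L (C c * p) = c * L p := by
  rw [← smul_eq_C_mul, map_smul, smul_eq_mul]

namespace IsSymmetricRecurrence

theorem mul_eval_succ (hγ : IsSymmetricRecurrence P γ) (n : ℕ) (x : R) :
    x * (P (n + 1)).eval x = (P (n + 2)).eval x + γ (n + 1) * (P n).eval x := by
  simpa using congrArg (eval x) (hγ.X_mul_succ n)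

theorem eval_neg (hγ : IsSymmetricRecurrence P γ) (n : ℕ) (x : R) :
    (P n).eval (-x) = (-1) ^ n * (P n).eval x := by
  induction n using Nat.twoStepInduction with
  | zero => simp [hγ.zero]
  | one => simp [hγ.one]
  | more n ih ih_succ =>
    have h_neg := hγ.mul_eval_succ n (-x)
    rw [ih, ih_succ] at h_neg
    linear_combination (-1) ^ n * hγ.mul_eval_succ n x - h_neg

end IsSymmetricRecurrence

namespace IsMonicOrthogonal

theorem coeff_self (hP : IsMonicOrthogonal L P) (n : ℕ) : (P n).coeff n = 1 := by
  simpa only [hP.natDegree_eq] using (hP.monic n).coeff_natDegree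

theorem map_mul_eq_zero (hP : IsMonicOrthogonal L P) {n : ℕ} {q : R[X]} (hq : q.degree < n) :
    L (q * P n) = 0 := by
  nontriviality R
  let S : Sequence R := ⟨P, fun i ↦ by
    rw [degree_eq_natDegree (hP.monic i).ne_zero, hP.natDegree_eq]⟩
  have h_span : Submodule.span R (P '' Set.Iio n) = degreeLT R n :=
    S.span_degreeLT fun i _ ↦ (hP.monic i).symm ▸ isUnit_one
  rw [← mem_degreeLT, ← h_span] at hq
  induction hq using Submodule.span_induction with
  | mem p hp =>
    obtain ⟨m, hm, rfl⟩ := hp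
    exact hP.orthogonal (ne_of_lt hm)
  | zero => simp
  | add p q _ _ hp hq => rw [add_mul, map_add, hp, hq, add_zero]
  | smul c p _ hp => rw [smul_mul_assoc, map_smul, hp, smul_zero]

theorem map_mul_eq_coeff_mul (hP : IsMonicOrthogonal L P) {n : ℕ} {q : R[X]}
    (hq : q.natDegree ≤ n) : L (q * P n) = q.coeff n * L (P n ^ 2) := by
  have remainder_degree_lt : (q - C (q.coeff n) * P n).degree < n := by
    rw [degree_lt_iff_coeff_zero]
    intro k hk
    rw [coeff_sub, coeff_C_mul]
    rcases hk.eq_or_lt with rfl | hk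
    · rw [hP.coeff_self, mul_one, sub_self]
    · rw [coeff_eq_zero_of_natDegree_lt (hq.trans_lt hk),
        coeff_eq_zero_of_natDegree_lt ((hP.natDegree_eq n).trans_lt hk), mul_zero, sub_zero]
  have h_zero := hP.map_mul_eq_zero remainder_degree_lt
  rwa [sub_mul, map_sub, mul_assoc, map_C_mul, ← sq, sub_eq_zero] at h_zero

theorem map_X_pow_mul_mul (hP : IsMonicOrthogonal L P) (m k : ℕ) :
    L (X ^ k * P m * P (m + k)) = L (P (m + k) ^ 2) := by
  have h_natDegree : (X ^ k * P m).natDegree ≤ m + k := by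
    grw [natDegree_mul_le, natDegree_X_pow_le, hP.natDegree_eq, add_comm]
  rw [hP.map_mul_eq_coeff_mul h_natDegree, coeff_X_pow_mul, hP.coeff_self, one_mul]

theorem map_derivative_mul_succ (hP : IsMonicOrthogonal L P) (n : ℕ) :
    L (derivative (P (n + 1) * P n)) = (n + 1) * L (P n ^ 2) := by
  have h_succ : L (derivative (P (n + 1)) * P n) = (n + 1) * L (P n ^ 2) := by
    have h_natDegree : (derivative (P (n + 1))).natDegree ≤ n := by
      simpa only [hP.natDegree_eq, Nat.add_sub_cancel] using natDegree_derivative_le (P (n + 1))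
    rw [hP.map_mul_eq_coeff_mul h_natDegree, coeff_derivative, hP.coeff_self, one_mul]
  have h_self : L (derivative (P n) * P (n + 1)) = 0 := by
    apply hP.map_mul_eq_zero
    grw [degree_derivative_le, degree_le_natDegree, hP.natDegree_eq]
    exact_mod_cast n.lt_succ_self
  rw [derivative_mul, map_add, h_succ, mul_comm (P (n + 1)), h_self, add_zero]

theorem map_sq_succ (hP : IsMonicOrthogonal L P) (hγ : IsSymmetricRecurrence P γ) (n : ℕ) :
    L (P (n + 1) ^ 2) = γ (n + 1) * L (P n ^ 2) := by
  have h_expand : X ^ 1 * P n * P (n + 1) = P (n + 2) * P n + C (γ (n + 1)) * P n ^ 2 := by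
    linear_combination P n * hγ.X_mul_succ n
  rw [← hP.map_X_pow_mul_mul n 1, h_expand, map_add, map_C_mul, hP.orthogonal (by lia), zero_add]

theorem map_X_mul_sq (hP : IsMonicOrthogonal L P) (hγ : IsSymmetricRecurrence P γ) (n : ℕ) :
    L ((X * P n) ^ 2) = (γ (n + 1) + γ n) * L (P n ^ 2) := by
  cases n with
  | zero =>
    rw [hγ.zero, mul_one, ← hγ.one, hP.map_sq_succ hγ, hγ.zero, hγ.coeff_zero, add_zero]
  | succ n =>
    have h_expand : (X * P (n + 1)) ^ 2 =
        X ^ 1 * P (n + 1) * P (n + 2) + C (γ (n + 1)) * (X ^ 1 * P n * P (n + 1)) := by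
      linear_combination X * P (n + 1) * hγ.X_mul_succ n
    rw [h_expand, map_add, map_C_mul, hP.map_X_pow_mul_mul (n + 1) 1, hP.map_X_pow_mul_mul n 1,
      hP.map_sq_succ hγ (n + 1)]
    ring

theorem map_X_pow_three_mul (hP : IsMonicOrthogonal L P) (hγ : IsSymmetricRecurrence P γ)
    (n : ℕ) :
    L (X ^ 3 * (P (n + 1) * P n)) =
      γ (n + 1) * (γ (n + 2) + γ (n + 1) + γ n) * L (P n ^ 2) := by
  have h_expand : X ^ 3 * (P (n + 1) * P n) =
      X ^ 2 * P n * P (n + 2) + C (γ (n + 1)) * (X * P n) ^ 2 := by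
    linear_combination X ^ 2 * P n * hγ.X_mul_succ n
  rw [h_expand, map_add, map_C_mul, hP.map_X_pow_mul_mul n 2, hP.map_X_mul_sq hγ,
    hP.map_sq_succ hγ (n + 1), hP.map_sq_succ hγ n]
  ring

end IsMonicOrthogonal

end OrthogonalPolynomials

section ExponentialWeight

theorem intervalIntegrable_eval_mul_exp_neg (V p : ℝ[X]) (a b : ℝ) :
    IntervalIntegrable (fun x ↦ p.eval x * Real.exp (-V.eval x)) volume a b :=
  (p.continuous.mul V.continuous.neg.rexp).intervalIntegrable a b

/-- The moment functional of the weight `exp (-V)` on the interval from `a` to `b`. -/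
noncomputable def expMoment (V : ℝ[X]) (a b : ℝ) : ℝ[X] →ₗ[ℝ] ℝ where
  toFun p := ∫ x in a..b, p.eval x * Real.exp (-V.eval x)
  map_add' p q := by
    simp only [eval_add, add_mul]
    exact intervalIntegral.integral_add (intervalIntegrable_eval_mul_exp_neg V p a b)
      (intervalIntegrable_eval_mul_exp_neg V q a b)
  map_smul' c p := by
    simp only [eval_smul, smul_eq_mul, mul_assoc, intervalIntegral.integral_const_mul,
      RingHom.id_apply]

theorem expMoment_apply (V : ℝ[X]) (a b : ℝ) (p : ℝ[X]) :
    expMoment V a b p = ∫ x in a..b, p.eval x * Real.exp (-V.eval x) := rfl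

theorem expMoment_derivative (V : ℝ[X]) (a b : ℝ) (p : ℝ[X]) :
    expMoment V a b (derivative p) = expMoment V a b (derivative V * p) +
      (p.eval b * Real.exp (-V.eval b) - p.eval a * Real.exp (-V.eval a)) := by
  rw [← sub_eq_iff_eq_add', ← map_sub, expMoment_apply]
  refine intervalIntegral.integral_eq_sub_of_hasDerivAt
    (f := fun x ↦ p.eval x * Real.exp (-V.eval x)) (fun x _ ↦ ?_)
    (intervalIntegrable_eval_mul_exp_neg V _ a b)
  refine ((p.hasDerivAt x).mul (V.hasDerivAt x).neg.exp).congr_deriv ?_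
  simp only [Pi.neg_apply, eval_sub, eval_mul]
  ring

theorem expMoment_X_pow_four_derivative (z : ℝ) (p : ℝ[X]) :
    expMoment (X ^ 4) (-z) z (derivative p) = 4 * expMoment (X ^ 4) (-z) z (X ^ 3 * p) +
      Real.exp (-z ^ 4) * (p.eval z - p.eval (-z)) := by
  have h_derivative : derivative (X ^ 4 : ℝ[X]) * p = C 4 * (X ^ 3 * p) := by
    rw [derivative_X_pow]
    norm_num [mul_assoc]
  rw [expMoment_derivative, h_derivative, map_C_mul, eval_X_pow, eval_X_pow,
    Even.neg_pow (by decide)]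
  ring

end ExponentialWeight

section TruncatedFreud

/-- The quantity `g_n` attached to recurrence coefficients `γ`, that is, half the amount by which
`γ` fails Freud's equation `n = 4 γ_n (γ_{n+1} + γ_n + γ_{n-1})` for the weight `exp (-x ^ 4)` on
the whole line. At `n = 0` the truncated index `n - 1` is harmless because `γ 0 = 0`. -/
noncomputable def freudDefect (γ : ℕ → ℝ) (n : ℕ) : ℝ :=
  (n : ℝ) / 2 - 2 * γ n * (γ (n + 1) + γ n + γ (n - 1))

variable {z : ℝ} {P : ℕ → ℝ[X]} {γ : ℕ → ℝ}

theorem freudDefect_succ_mul (hP : IsMonicOrthogonal (expMoment (X ^ 4) (-z) z) P)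
    (hγ : IsSymmetricRecurrence P γ) (n : ℕ) :
    freudDefect γ (n + 1) * expMoment (X ^ 4) (-z) z (P n ^ 2) =
      Real.exp (-z ^ 4) * ((P (n + 1)).eval z * (P n).eval z) := by
  have h_odd : (P (n + 1) * P n).eval (-z) = -((P (n + 1)).eval z * (P n).eval z) := by
    have h_sign : (-1 : ℝ) ^ n * (-1) ^ n = 1 := by rw [← mul_pow]; norm_num
    rw [eval_mul, hγ.eval_neg, hγ.eval_neg]
    linear_combination -(P (n + 1)).eval z * (P n).eval z * h_sign
  have h_parts := expMoment_X_pow_four_derivative z (P (n + 1) * P n)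
  rw [hP.map_derivative_mul_succ, hP.map_X_pow_three_mul hγ, h_odd, eval_mul] at h_parts
  simp only [freudDefect, Nat.add_sub_cancel, Nat.cast_add, Nat.cast_one]
  linear_combination h_parts / 2

theorem freudDefect_succ_add_mul (hP : IsMonicOrthogonal (expMoment (X ^ 4) (-z) z) P)
    (hγ : IsSymmetricRecurrence P γ) (n : ℕ) :
    (freudDefect γ (n + 1) + freudDefect γ n) * expMoment (X ^ 4) (-z) z (P n ^ 2) =
      z * Real.exp (-z ^ 4) * (P n).eval z ^ 2 := by
  cases n with
  | zero =>
    have h_zero : freudDefect γ 0 = 0 := by simp [freudDefect, hγ.coeff_zero]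
    rw [h_zero, add_zero, freudDefect_succ_mul hP hγ, hγ.one, hγ.zero, eval_X, eval_one]
    ring
  | succ n =>
    linear_combination freudDefect_succ_mul hP hγ (n + 1)
      + γ (n + 1) * freudDefect_succ_mul hP hγ n
      + freudDefect γ (n + 1) * hP.map_sq_succ hγ n
      - Real.exp (-z ^ 4) * (P (n + 1)).eval z * hγ.mul_eval_succ n z

theorem sq_mul_freudDefect_succ_sq (hP : IsMonicOrthogonal (expMoment (X ^ 4) (-z) z) P)
    (hγ : IsSymmetricRecurrence P γ) {n : ℕ}
    (hn : expMoment (X ^ 4) (-z) z (P n ^ 2) ≠ 0) :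
    z ^ 2 * freudDefect γ (n + 1) ^ 2 =
      γ (n + 1) * (freudDefect γ (n + 2) + freudDefect γ (n + 1)) *
        (freudDefect γ (n + 1) + freudDefect γ n) := by
  set w := Real.exp (-z ^ 4)
  set N := fun k ↦ expMoment (X ^ 4) (-z) z (P k ^ 2)
  have h_sum (k : ℕ) : (freudDefect γ (k + 1) + freudDefect γ k) * N k =
      z * w * (P k).eval z ^ 2 := freudDefect_succ_add_mul hP hγ k
  have h_norm : N (n + 1) = γ (n + 1) * N n := hP.map_sq_succ hγ n
  apply mul_right_cancel₀ (pow_ne_zero 2 hn)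
  calc z ^ 2 * freudDefect γ (n + 1) ^ 2 * N n ^ 2
      = z ^ 2 * (freudDefect γ (n + 1) * N n) ^ 2 := by ring
    _ = (z * w * (P (n + 1)).eval z ^ 2) * (z * w * (P n).eval z ^ 2) := by
        rw [freudDefect_succ_mul hP hγ]; ring
    _ = γ (n + 1) * (freudDefect γ (n + 2) + freudDefect γ (n + 1)) *
          (freudDefect γ (n + 1) + freudDefect γ n) * N n ^ 2 := by
        rw [← h_sum, ← h_sum, h_norm]; ring

end TruncatedFreud

/-- The quantities `g_n = n/2 - 2γ_n(γ_{n+1}+γ_n+γ_{n-1})` (with `g_0 = 0`)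
satisfy the coupled nonlinear relation `z²·g_n² = γ_n·(g_{n+1}+g_n)·(g_n+g_{n-1})`
for all `n ≥ 1`. -/
theorem truncated_freud_gn_relation (z : ℝ) (hz : 0 < z)
    (P : ℕ → Polynomial ℝ) (γ h : ℕ → ℝ)
    (hmonic : ∀ n, (P n).Monic)
    (hdeg : ∀ n, (P n).natDegree = n)
    (horth : ∀ m n, m ≠ n →
      ∫ x in (-z)..z, (P m).eval x * (P n).eval x * Real.exp (-x ^ 4) = 0)
    (hh : ∀ n, h n = ∫ x in (-z)..z, ((P n).eval x) ^ 2 * Real.exp (-x ^ 4))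
    (hhpos : ∀ n, 0 < h n)
    (hP0 : P 0 = 1) (hP1 : P 1 = Polynomial.X)
    (hrec : ∀ n, Polynomial.X * P (n + 1) = P (n + 2) + Polynomial.C (γ (n + 1)) * P n)
    (hγ0 : γ 0 = 0)
    (hγ : ∀ n, γ (n + 1) = h (n + 1) / h n)
    (g : ℕ → ℝ) (hg0 : g 0 = 0)
    (hg : ∀ n, 1 ≤ n → g n = (n : ℝ) / 2 - 2 * γ n * (γ (n + 1) + γ n + γ (n - 1))) :
    ∀ n, 1 ≤ n → z ^ 2 * g n ^ 2 = γ n * (g (n + 1) + g n) * (g n + g (n - 1)) := by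
  have hP : IsMonicOrthogonal (expMoment (X ^ 4) (-z) z) P :=
    ⟨hmonic, hdeg, fun {m n} hmn ↦ by simpa [expMoment_apply] using horth m n hmn⟩
  have hrecurrence : IsSymmetricRecurrence P γ := ⟨hP0, hP1, hγ0, hrec⟩
  have hnorm (n : ℕ) : expMoment (X ^ 4) (-z) z (P n ^ 2) ≠ 0 := by
    simpa [expMoment_apply, hh] using (hhpos n).ne'
  obtain rfl : g = freudDefect γ := by
    funext n
    rcases n.eq_zero_or_pos with rfl | hn
    · simp [freudDefect, hg0, hγ0]
    · exact hg n hn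
  intro n hn
  obtain ⟨n, rfl⟩ := Nat.exists_eq_add_of_le' hn
  exact sq_mul_freudDefect_succ_sq hP hrecurrence (hnorm n)
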